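/- arXiv:2002.07975 — 3 statements merged into one kernel-verified Lean document; each statement's English description precedes it below -/
import Mathlib

section
/- Let B be a symmetric positive-definite 2×2 real matrix and set A := B². Let κ ∈ (0, 2π) and α ∈ ℝ, and let D_{κ,α} := { (r cos θ, r sin θ) ∈ ℝ² : r > 0, α − κ/2 < θ < α + κ/2 }. Let R_α be the rotation matrix with rows (cos α, sin α) and (−sin α, cos α), set Ā := R_α A R_αᵀ, and write ā := Ā₁₁, b̄ := Ā₁₂, c̄ := Ā₂₂. Then the two-dimensional Lebesgue measure of (B⁻¹ D_{κ,α}) ∩ B₁(0) equals (1/2)·( π − arctan( (c̄·cot(κ/2) − b̄)/√(det A) ) − arctan( (c̄·cot(κ/2) + b̄)/√(det A) ) ). -/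
/-!
The area is computed without integrating over the transformed sector. In the coordinates
`(x, y) = R_α B z`, a point `B z` of the sector is, off the ray `y = 0 < x`, characterised by
`0 < y` and `y cot (κ/2) < x`, or by `y < 0` and `-y cot (κ/2) < x` (`rotate_sector_iff`,
`mem_sector_iff`). Write `(P, Q)` and `(U, V)` for the rows of `R_α B`, so that
`c̄ = U² + V²`, `b̄ = P U + Q V` and `P V - Q U = det B = √(det A)`. The rotation
`(u, v) = (V z₀ - U z₁, U z₀ + V z₁) / √c̄` preserves area and the unit disc, and it satisfies
`y = √c̄ v` and `√c̄ x = √(det A) u + b̄ v`. Hence it carries the two halves of the region to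
`0 < v, m v < u` and `v < 0, n (-v) < u` with `m, n = (c̄ cot (κ/2) ∓ b̄) / √(det A)`.
The part of the unit disc in each half is a circular sector, of angle `π/2 - arctan m` and
`π/2 - arctan n` respectively; polar coordinates give its area (`volume_wedge`).
-/

open Real MeasureTheory

/-- The planar angular sector of central angle `κ` around direction `α`. -/
def sector (κ α : ℝ) : Set (Fin 2 → ℝ) :=
  {x | ∃ r θ : ℝ, 0 < r ∧ α - κ / 2 < θ ∧ θ < α + κ / 2 ∧
    x = ![r * Real.cos θ, r * Real.sin θ]}

/-- The open unit disc in the plane. -/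
def unitDisc : Set (Fin 2 → ℝ) := {x | x 0 ^ 2 + x 1 ^ 2 < 1}

/-- Membership in an angular range `(0, β)` as two linear inequalities in `(cos θ, sin θ)`, where `k`
is the cotangent of `β`. It rests on `sin (β - θ) = sin β (cos θ - k sin θ)`. -/
theorem angle_mem_iff {β k θ : ℝ} (hβ : β ∈ Set.Ioo 0 π) (hk : k * sin β = cos β)
    (hθ : θ ∈ Set.Ioc (-π) π) :
    (0 < sin θ ∧ k * sin θ < cos θ) ↔ (0 < θ ∧ θ < β) := by
  obtain ⟨h0, h1⟩ := hβ
  obtain ⟨h2, h3⟩ := hθ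
  have hsβ : 0 < sin β := sin_pos_of_pos_of_lt_pi h0 h1
  have key : sin (β - θ) = sin β * (cos θ - k * sin θ) := by
    rw [sin_sub, ← hk]; ring
  constructor
  · rintro ⟨hs, hc⟩
    have hpos : 0 < θ := by
      by_contra h
      exact absurd hs (not_lt.2 (sin_nonpos_of_nonpos_of_neg_pi_le (not_lt.1 h) h2.le))
    refine ⟨hpos, ?_⟩
    by_contra h
    have h4 : sin (β - θ) ≤ 0 :=
      sin_nonpos_of_nonpos_of_neg_pi_le (by linarith) (by linarith)
    have h5 : 0 < sin (β - θ) := by rw [key]; exact mul_pos hsβ (by linarith)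
    linarith
  · rintro ⟨hp, hl⟩
    refine ⟨sin_pos_of_pos_of_lt_pi hp (by linarith), ?_⟩
    have h5 : 0 < sin (β - θ) := sin_pos_of_pos_of_lt_pi (by linarith) (by linarith)
    rw [key] at h5
    linarith [pos_of_mul_pos_right h5 hsβ.le]

/-- The part of the open unit disc lying in the upper half-plane to the right of the line
`p 0 = m * p 1`: a circular sector of angle `π / 2 - arctan m`. -/
def wedge (m : ℝ) : Set (Fin 2 → ℝ) :=
  {p | 0 < p 1 ∧ m * p 1 < p 0 ∧ p 0 ^ 2 + p 1 ^ 2 < 1}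

theorem measurableSet_wedge (m : ℝ) : MeasurableSet (wedge m) := by
  have h : IsOpen (wedge m) := by
    simp only [wedge, Set.ofPred_and]
    exact (isOpen_lt (by fun_prop) (by fun_prop)).inter
      ((isOpen_lt (by fun_prop) (by fun_prop)).inter (isOpen_lt (by fun_prop) (by fun_prop)))
  exact h.measurableSet

theorem volume_wedge (m : ℝ) :
    volume (wedge m) = ENNReal.ofReal ((π / 2 - arctan m) / 2) := by
  set β := π / 2 - arctan m with hβdef
  have hβ : β ∈ Set.Ioo 0 π :=
    ⟨by linarith [arctan_lt_pi_div_two m], by linarith [neg_pi_div_two_lt_arctan m]⟩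
  -- `m` is the cotangent of `β`.
  have hk : m * sin β = cos β := by
    rw [hβdef, sin_pi_div_two_sub, cos_pi_div_two_sub]
    conv_lhs => rw [← tan_arctan m]
    rw [arctan_tan (neg_pi_div_two_lt_arctan m) (arctan_lt_pi_div_two m), tan_mul_cos]
    exact (cos_arctan_pos m).ne'
  let S : Set (ℝ × ℝ) := {p | 0 < p.2 ∧ m * p.2 < p.1 ∧ p.1 ^ 2 + p.2 ^ 2 < 1}
  have hS : MeasurableSet S := by
    have h : IsOpen S := by
      simp only [S, Set.ofPred_and]
      exact (isOpen_lt (by fun_prop) (by fun_prop)).inter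
        ((isOpen_lt (by fun_prop) (by fun_prop)).inter (isOpen_lt (by fun_prop) (by fun_prop)))
    exact h.measurableSet
  have e1 : volume (wedge m) = volume S := by
    rw [← (volume_preserving_finTwoArrow ℝ).measure_preimage hS.nullMeasurableSet]
    rfl
  rw [e1, ← lintegral_indicator_one hS, ← lintegral_comp_polarCoord_symm]
  have e2 : ∀ p ∈ polarCoord.target,
      ENNReal.ofReal p.1 • S.indicator (1 : ℝ × ℝ → ENNReal) (polarCoord.symm p)
        = (Set.Ioo (0 : ℝ) 1 ×ˢ Set.Ioo (0 : ℝ) β).indicator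
          (fun p => ENNReal.ofReal p.1) p := by
    rintro ⟨r, θ⟩ hp
    rw [polarCoord_target] at hp
    obtain ⟨hr, hθ⟩ := hp
    simp only [Set.mem_Ioi] at hr
    have hiff : polarCoord.symm (r, θ) ∈ S ↔
        (r, θ) ∈ (Set.Ioo (0 : ℝ) 1 ×ˢ Set.Ioo (0 : ℝ) β) := by
      have h1 := angle_mem_iff hβ hk ⟨hθ.1, hθ.2.le⟩
      have h2 : (r * cos θ) ^ 2 + (r * sin θ) ^ 2 = r ^ 2 := by
        linear_combination r ^ 2 * sin_sq_add_cos_sq θ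
      have h3 : m * (r * sin θ) < r * cos θ ↔ m * sin θ < cos θ := by
        rw [mul_left_comm, mul_lt_mul_iff_right₀ hr]
      have h4 : r ^ 2 < 1 ↔ r < 1 := by
        rw [sq_lt_one_iff₀ hr.le]
      simp only [S, Set.mem_ofPred_eq, polarCoord_symm_apply, Set.mem_prod, Set.mem_Ioo, h2, h3,
        h4, mul_pos_iff_of_pos_left hr, hr, true_and, ← h1]
      tauto
    by_cases h : polarCoord.symm (r, θ) ∈ S
    · rw [Set.indicator_of_mem h, Set.indicator_of_mem (hiff.1 h)]; simp
    · rw [Set.indicator_of_notMem h, Set.indicator_of_notMem (fun h' => h (hiff.2 h'))]; simp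
  rw [setLIntegral_congr_fun polarCoord.open_target.measurableSet e2,
    setLIntegral_indicator (measurableSet_Ioo.prod measurableSet_Ioo)]
  have e3 : (Set.Ioo (0 : ℝ) 1 ×ˢ Set.Ioo (0 : ℝ) β) ∩ polarCoord.target
      = Set.Ioo (0 : ℝ) 1 ×ˢ Set.Ioo (0 : ℝ) β := by
    apply Set.inter_eq_left.2
    rintro ⟨r, θ⟩ ⟨h1, h2⟩
    rw [polarCoord_target]
    simp only [Set.mem_Ioo] at h1 h2
    exact ⟨h1.1, by linarith [pi_pos], by linarith [hβ.2]⟩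
  rw [e3, Measure.volume_eq_prod, ← Measure.prod_restrict]
  have e4 := lintegral_prod_mul (μ := volume.restrict (Set.Ioo (0 : ℝ) 1))
    (ν := volume.restrict (Set.Ioo (0 : ℝ) β)) (f := fun r => ENNReal.ofReal r)
    (g := fun _ => 1) (by fun_prop) (by fun_prop)
  simp only [mul_one] at e4
  rw [e4]
  have e5 : ∫⁻ r in Set.Ioo (0 : ℝ) 1, ENNReal.ofReal r = ENNReal.ofReal (1 / 2) := by
    rw [← ofReal_integral_eq_lintegral_ofReal]
    · rw [← integral_Ioc_eq_integral_Ioo, ← intervalIntegral.integral_of_le zero_le_one]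
      simp
    · exact (continuous_id.integrableOn_Icc).mono_set Set.Ioo_subset_Icc_self
    · exact (ae_restrict_iff' measurableSet_Ioo).2 (Filter.Eventually.of_forall fun x hx => hx.1.le)
  rw [e5]
  simp only [lintegral_const, MeasurableSet.univ, Measure.restrict_apply, Set.univ_inter,
    Real.volume_Ioo, one_mul, sub_zero]
  rw [← ENNReal.ofReal_mul (by norm_num)]
  congr 1; ring

/-- The sector symmetric about the positive first axis is the union of an open upper part, its mirror
image, and the positive first axis itself. -/
theorem mem_sector_iff {κ : ℝ} (hκ : κ ∈ Set.Ioo 0 (2 * π)) (x y : ℝ) :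
    (∃ r θ : ℝ, 0 < r ∧ -(κ / 2) < θ ∧ θ < κ / 2 ∧ x = r * cos θ ∧ y = r * sin θ) ↔
      (0 < y ∧ cot (κ / 2) * y < x) ∨ (y < 0 ∧ cot (κ / 2) * (-y) < x) ∨ (y = 0 ∧ 0 < x) := by
  have hβ : κ / 2 ∈ Set.Ioo 0 π := ⟨by linarith [hκ.1], by linarith [hκ.2]⟩
  have hk : cot (κ / 2) * sin (κ / 2) = cos (κ / 2) := by
    rw [cot_eq_cos_div_sin, div_mul_cancel₀ _ (sin_pos_of_pos_of_lt_pi hβ.1 hβ.2).ne']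
  generalize cot (κ / 2) = k at *
  generalize κ / 2 = β at *
  obtain ⟨hβ0, hβ1⟩ := id hβ
  constructor
  · rintro ⟨r, θ, hr, h1, h2, rfl, rfl⟩
    rcases lt_trichotomy θ 0 with h | rfl | h
    · obtain ⟨h3, h4⟩ := (angle_mem_iff (θ := -θ) hβ hk ⟨by linarith, by linarith⟩).2
        ⟨by linarith, by linarith⟩
      rw [sin_neg] at h3 h4
      rw [cos_neg] at h4
      right; left
      constructor <;> nlinarith
    · right; right; simp [hr]
    · obtain ⟨h3, h4⟩ := (angle_mem_iff hβ hk ⟨by linarith, by linarith⟩).2 ⟨h, h2⟩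
      left
      constructor <;> nlinarith
  · intro H
    have hz : (⟨x, y⟩ : ℂ) ≠ 0 := by
      intro h
      rw [Complex.ext_iff] at h
      simp only [Complex.zero_re, Complex.zero_im] at h
      obtain ⟨rfl, rfl⟩ := h
      simp at H
    set z : ℂ := ⟨x, y⟩
    have hr : 0 < ‖z‖ := norm_pos_iff.2 hz
    have hx : x = ‖z‖ * cos z.arg := (Complex.norm_mul_cos_arg z).symm
    have hy : y = ‖z‖ * sin z.arg := (Complex.norm_mul_sin_arg z).symm
    have ha := Complex.arg_mem_Ioc z
    generalize z.arg = θ at *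
    generalize ‖z‖ = r at *
    clear_value z
    subst hx hy
    rcases H with ⟨h1, h2⟩ | ⟨h1, h2⟩ | ⟨h1, h2⟩
    · have h3 : 0 < sin θ := pos_of_mul_pos_right h1 hr.le
      have h4 : k * sin θ < cos θ := by
        rw [← mul_lt_mul_iff_right₀ hr]; linarith
      have := (angle_mem_iff hβ hk ha).1 ⟨h3, h4⟩
      exact ⟨r, θ, hr, by linarith, by linarith, rfl, rfl⟩
    · have h3 : 0 < sin (-θ) := by rw [sin_neg]; nlinarith
      have h4 : k * sin (-θ) < cos (-θ) := by
        rw [← mul_lt_mul_iff_right₀ hr, sin_neg, cos_neg]; linarith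
      have hne : θ ≠ π := by rintro rfl; simp at h3
      have := (angle_mem_iff hβ hk ⟨by linarith [lt_of_le_of_ne ha.2 hne], by linarith [ha.1]⟩).1
        ⟨h3, h4⟩
      exact ⟨r, θ, hr, by linarith, by linarith, rfl, rfl⟩
    · exact ⟨r * cos θ, 0, h2, by linarith, by linarith, by simp, by simpa using h1⟩

/-- Linear maps of determinant `±1` preserve area; no measurability of `S` is needed. -/
theorem volume_preimage_mulVec {M : Matrix (Fin 2) (Fin 2) ℝ} (hM : |M.det| = 1)
    (S : Set (Fin 2 → ℝ)) : volume ((fun z => M.mulVec z) ⁻¹' S) = volume S := by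
  have h0 : LinearMap.det (Matrix.toLin' M) ≠ 0 := by
    rw [LinearMap.det_toLin']
    intro h; simp [h] at hM
  have h := Measure.addHaar_preimage_linearMap volume h0 S
  rw [LinearMap.det_toLin', abs_inv, hM, inv_one, ENNReal.ofReal_one, one_mul] at h
  exact h

/-- Two circular sectors on either side of the first axis. The separating ray is a null set, and the
lower sector is the reflection of a `wedge`. -/
theorem volume_doubleWedge (m n : ℝ) :
    volume {p : Fin 2 → ℝ | ((0 < p 1 ∧ m * p 1 < p 0) ∨ (p 1 < 0 ∧ n * (-p 1) < p 0) ∨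
        (p 1 = 0 ∧ 0 < p 0)) ∧ p 0 ^ 2 + p 1 ^ 2 < 1}
      = ENNReal.ofReal (1 / 2 * (π - arctan m - arctan n)) := by
  let J : Matrix (Fin 2) (Fin 2) ℝ := !![1, 0; 0, -1]
  have hJ : ∀ p : Fin 2 → ℝ, J.mulVec p = ![p 0, -p 1] := by
    intro p; ext i; fin_cases i <;> simp [J, Matrix.mulVec, dotProduct]
  let L : Set (Fin 2 → ℝ) := (fun z => J.mulVec z) ⁻¹' wedge n
  have hL : volume L = volume (wedge n) :=
    volume_preimage_mulVec (by simp [J, Matrix.det_fin_two]) _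
  have hLmem : ∀ p, p ∈ L ↔ (p 1 < 0 ∧ n * (-p 1) < p 0 ∧ p 0 ^ 2 + p 1 ^ 2 < 1) := by
    intro p; simp [L, hJ, wedge]
  have hLmeas : MeasurableSet L :=
    measurableSet_wedge n |>.preimage (by
      have : Continuous fun z : Fin 2 → ℝ => J.mulVec z := by fun_prop
      exact this.measurable)
  have hnull : volume {p : Fin 2 → ℝ | p 1 = 0} = 0 :=
    Measure.pi_hyperplane (fun _ : Fin 2 => (volume : Measure ℝ)) 1 0
  have hae : ∀ᵐ p : Fin 2 → ℝ, p 1 ≠ 0 := by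
    rw [ae_iff]; simpa using hnull
  have hdisj : Disjoint (wedge m) L := by
    rw [Set.disjoint_left]
    intro p hp hp'
    rw [hLmem] at hp'
    exact absurd hp.1 (not_lt.2 hp'.1.le)
  have key : volume {p : Fin 2 → ℝ | ((0 < p 1 ∧ m * p 1 < p 0) ∨
      (p 1 < 0 ∧ n * (-p 1) < p 0) ∨ (p 1 = 0 ∧ 0 < p 0)) ∧ p 0 ^ 2 + p 1 ^ 2 < 1}
      = volume (wedge m ∪ L) := by
    apply measure_congr
    filter_upwards [hae] with p hp
    apply propext
    change ((_ ∨ _ ∨ _) ∧ _) ↔ (p ∈ wedge m ∪ L)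
    rw [Set.mem_union, hLmem]
    simp only [wedge, Set.mem_ofPred_eq]
    tauto
  rw [key, measure_union hdisj hLmeas, hL, volume_wedge, volume_wedge,
    ← ENNReal.ofReal_add (by linarith [arctan_lt_pi_div_two m])
      (by linarith [arctan_lt_pi_div_two n])]
  congr 1; ring

/-- Rotating by `-α` turns `sector κ α` into the sector symmetric about the positive first axis. -/
theorem rotate_sector_iff {κ α X Y : ℝ} :
    ![X, Y] ∈ sector κ α ↔ ∃ r θ : ℝ, 0 < r ∧ -(κ / 2) < θ ∧ θ < κ / 2 ∧
      cos α * X + sin α * Y = r * cos θ ∧ -sin α * X + cos α * Y = r * sin θ := by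
  have hsc := sin_sq_add_cos_sq α
  constructor
  · rintro ⟨r, θ, hr, h1, h2, h⟩
    have hX : X = r * cos θ := congrFun h 0
    have hY : Y = r * sin θ := congrFun h 1
    refine ⟨r, θ - α, hr, by linarith, by linarith, ?_, ?_⟩
    · rw [cos_sub, hX, hY]; ring
    · rw [sin_sub, hX, hY]; ring
  · rintro ⟨r, θ, hr, h1, h2, hX, hY⟩
    refine ⟨r, θ + α, hr, by linarith, by linarith, ?_⟩
    rw [cos_add, sin_add]
    congr 1
    · linear_combination -X * hsc + cos α * hX - sin α * hY
    · congr 1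
      linear_combination -Y * hsc + sin α * hX + cos α * hY

/-- Closed-form value of the Lebesgue measure of `(B⁻¹ D_{κ,α}) ∩ B₁(0)` for a symmetric
positive-definite `B` with `A = B²`, in terms of the entries of `Ā = R_α A R_αᵀ`. -/
theorem stmt_12 (B : Matrix (Fin 2) (Fin 2) ℝ) (hBsymm : B.IsSymm) (hBpos : B.PosDef)
    (A : Matrix (Fin 2) (Fin 2) ℝ) (hA : A = B * B) (κ α : ℝ)
    (hκ : κ ∈ Set.Ioo 0 (2 * π))
    (Rα Abar : Matrix (Fin 2) (Fin 2) ℝ)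
    (hR : Rα = !![Real.cos α, Real.sin α; -Real.sin α, Real.cos α])
    (hAbar : Abar = Rα * A * Rα.transpose) :
    volume ((fun x => B⁻¹.mulVec x) '' sector κ α ∩ unitDisc)
      = ENNReal.ofReal ((1 / 2) *
          (π - Real.arctan ((Abar 1 1 * Real.cot (κ / 2) - Abar 0 1) / Real.sqrt A.det)
             - Real.arctan ((Abar 1 1 * Real.cot (κ / 2) + Abar 0 1) / Real.sqrt A.det))) := by
  have hD : 0 < B.det := hBpos.det_pos
  have hsqrt : Real.sqrt A.det = B.det := by
    rw [hA, Matrix.det_mul, Real.sqrt_mul_self hD.le]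
  have hunit : IsUnit B.det := isUnit_iff_ne_zero.2 hD.ne'
  set D := B.det with hDdef
  have hsymm : B 1 0 = B 0 1 := hBsymm.apply 0 1
  set P := cos α * B 0 0 + sin α * B 1 0 with hP
  set Q := cos α * B 0 1 + sin α * B 1 1 with hQ
  set U := -sin α * B 0 0 + cos α * B 1 0 with hU
  set V := -sin α * B 0 1 + cos α * B 1 1 with hV
  have hsc := sin_sq_add_cos_sq α
  have hdet : P * V - Q * U = D := by
    rw [hDdef, Matrix.det_fin_two, hP, hQ, hU, hV]
    linear_combination (B 0 0 * B 1 1 - B 0 1 * B 1 0) * hsc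
  have hc : Abar 1 1 = U ^ 2 + V ^ 2 := by
    rw [hAbar, hR, hA, hU, hV]
    simp [Matrix.mul_apply, Matrix.vecMul, dotProduct, Fin.sum_univ_two, hsymm]
    ring
  have hb : Abar 0 1 = P * U + Q * V := by
    rw [hAbar, hR, hA, hP, hQ, hU, hV]
    simp [Matrix.mul_apply, Matrix.vecMul, dotProduct, Fin.sum_univ_two, hsymm]
    ring
  rw [hsqrt, hc, hb]
  set k := cot (κ / 2) with hk
  have hcpos : 0 < U ^ 2 + V ^ 2 := by
    by_contra h
    have hU0 : U = 0 := by nlinarith [sq_nonneg U, sq_nonneg V]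
    have hV0 : V = 0 := by nlinarith [sq_nonneg U, sq_nonneg V]
    rw [hU0, hV0] at hdet
    linarith
  set s := Real.sqrt (U ^ 2 + V ^ 2) with hs
  have hspos : 0 < s := Real.sqrt_pos.2 hcpos
  have hs2 : s ^ 2 = U ^ 2 + V ^ 2 := Real.sq_sqrt hcpos.le
  -- The rotation in the source plane that sends the line `y = 0` to the first axis.
  let M : Matrix (Fin 2) (Fin 2) ℝ := !![V / s, -U / s; U / s, V / s]
  have hM : |M.det| = 1 := by
    have : M.det = 1 := by
      simp only [M, Matrix.det_fin_two_of]
      field_simp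
      linarith
    rw [this, abs_one]
  rw [← volume_doubleWedge]
  refine Eq.trans ?_ (volume_preimage_mulVec hM _)
  congr 1
  ext z
  have hBz : z ∈ (fun x => B⁻¹.mulVec x) '' sector κ α ↔ B.mulVec z ∈ sector κ α := by
    constructor
    · rintro ⟨x, hx, rfl⟩
      rwa [Matrix.mulVec_mulVec, Matrix.mul_nonsing_inv B hunit, Matrix.one_mulVec]
    · intro h
      refine ⟨_, h, ?_⟩
      change B⁻¹.mulVec (B.mulVec z) = z
      rw [Matrix.mulVec_mulVec, Matrix.nonsing_inv_mul B hunit, Matrix.one_mulVec]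
  have hBz' : B.mulVec z = ![B 0 0 * z 0 + B 0 1 * z 1, B 1 0 * z 0 + B 1 1 * z 1] := by
    ext i; fin_cases i <;> simp [Matrix.mulVec, dotProduct, Fin.sum_univ_two]
  set u := M.mulVec z 0 with hu
  set v := M.mulVec z 1 with hv
  have hu' : s * u = V * z 0 - U * z 1 := by
    simp [hu, M, Matrix.mulVec, dotProduct, Fin.sum_univ_two]; field_simp; ring
  have hv' : s * v = U * z 0 + V * z 1 := by
    simp [hv, M, Matrix.mulVec, dotProduct, Fin.sum_univ_two]; field_simp
  have hx : cos α * (B 0 0 * z 0 + B 0 1 * z 1) + sin α * (B 1 0 * z 0 + B 1 1 * z 1)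
      = P * z 0 + Q * z 1 := by rw [hP, hQ]; ring
  have hy : -sin α * (B 0 0 * z 0 + B 0 1 * z 1) + cos α * (B 1 0 * z 0 + B 1 1 * z 1)
      = s * v := by rw [hv', hU, hV]; ring
  have hnorm : u ^ 2 + v ^ 2 = z 0 ^ 2 + z 1 ^ 2 := by
    have : s ^ 2 * (u ^ 2 + v ^ 2) = s ^ 2 * (z 0 ^ 2 + z 1 ^ 2) := by
      rw [hs2]
      linear_combination (-(u ^ 2 + v ^ 2)) * hs2 + (s * u + (V * z 0 - U * z 1)) * hu'
        + (s * v + (U * z 0 + V * z 1)) * hv'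
    exact mul_left_cancel₀ (pow_pos hspos 2).ne' this
  have hxu : s * (P * z 0 + Q * z 1) = D * u + (P * U + Q * V) * v := by
    apply mul_left_cancel₀ hspos.ne'
    linear_combination (P * z 0 + Q * z 1) * hs2 - D * hu' - (P * U + Q * V) * hv'
      + (V * z 0 - U * z 1) * hdet
  have hup : k * (s * v) < P * z 0 + Q * z 1 ↔
      ((U ^ 2 + V ^ 2) * k - (P * U + Q * V)) / D * v < u := by
    rw [← mul_lt_mul_iff_right₀ hspos, hxu, ← hs2, div_mul_eq_mul_div, div_lt_iff₀ hD]
    constructor <;> intro h <;> linarith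
  have hlow : k * (-(s * v)) < P * z 0 + Q * z 1 ↔
      ((U ^ 2 + V ^ 2) * k + (P * U + Q * V)) / D * (-v) < u := by
    rw [← mul_lt_mul_iff_right₀ hspos, hxu, ← hs2, div_mul_eq_mul_div, div_lt_iff₀ hD]
    constructor <;> intro h <;> linarith
  have hray : (s * v = 0 ∧ 0 < P * z 0 + Q * z 1) ↔ (v = 0 ∧ 0 < u) := by
    rw [mul_eq_zero, or_iff_right hspos.ne']
    refine and_congr_right fun h => ?_
    rw [← mul_pos_iff_of_pos_left hspos, hxu, h, mul_zero, add_zero,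
      mul_pos_iff_of_pos_left hD]
  have hneg : s * v < 0 ↔ v < 0 := by
    rw [← neg_pos, ← mul_neg, mul_pos_iff_of_pos_left hspos, neg_pos]
  have hsec : B.mulVec z ∈ sector κ α ↔
      (0 < v ∧ ((U ^ 2 + V ^ 2) * k - (P * U + Q * V)) / D * v < u) ∨
      (v < 0 ∧ ((U ^ 2 + V ^ 2) * k + (P * U + Q * V)) / D * (-v) < u) ∨ (v = 0 ∧ 0 < u) := by
    rw [hBz', rotate_sector_iff, hx, hy, mem_sector_iff hκ, ← hk, hup, hlow, hray,
      mul_pos_iff_of_pos_left hspos, hneg]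
  rw [Set.mem_inter_iff, hBz, hsec]
  change _ ∧ z 0 ^ 2 + z 1 ^ 2 < 1 ↔ _ ∧ u ^ 2 + v ^ 2 < 1
  rw [hnorm]
end

section
/- Let T : ℝ² → ℝ² be an invertible linear map, let κ ∈ (0, 2π) and α ∈ ℝ, and let D_{κ,α} := { (r cos θ, r sin θ) ∈ ℝ² : r > 0, α − κ/2 < θ < α + κ/2 }. Then there exist κ̃ ∈ (0, 2π) and α̃ ∈ ℝ such that T(D_{κ,α}) = D_{κ̃,α̃}; moreover κ̃ = 2 · μ( T(D_{κ,α}) ∩ B₁(0) ), where μ denotes two-dimensional Lebesgue measure and B₁(0) is the open unit disc. -/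
/-!
Cut the sector along its central ray, spanned by `e`. Since `κ / 2 < π`, each of the two halves
(central ray included) is a half-open convex cone `{a • e + b • p | 0 < a, 0 ≤ b}`, where `p` spans
the corresponding boundary ray (`sector_eq_union`). Linear maps send such cones to such cones. An
invertible map multiplies the cross product of two vectors by its nonzero determinant, so the two
image cones lie on opposite sides of the image of the central ray; each of them consists of the
rays at an angle between `0` and some `γ < π` from that common edge (`halfCone_eq`), and their union
is a sector of angle less than `2π` (`union_halfCone_eq_sector`). No distinction between convex and
non-convex sectors is needed.

The area of a sector of angle `κ` in the unit disc is `κ / 2` by the change of variables to polar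
coordinates, which are injective on a strip of angles of width less than `2π`.
-/

open Real MeasureTheory

/-- The unit vector at angle `θ`. -/
noncomputable def dir (θ : ℝ) : Fin 2 → ℝ := ![Real.cos θ, Real.sin θ]

/-- The planar cross product (the determinant with columns `x`, `y`). -/
def cross (x y : Fin 2 → ℝ) : ℝ := x 0 * y 1 - x 1 * y 0

/-- The convex cone spanned by `w` and `p`, with the edge along `w` included and the edge along `p`
excluded. -/
def halfCone (w p : Fin 2 → ℝ) : Set (Fin 2 → ℝ) :=
  {x | ∃ a b : ℝ, 0 < a ∧ 0 ≤ b ∧ x = a • w + b • p}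

lemma image_halfCone (T : (Fin 2 → ℝ) →ₗ[ℝ] (Fin 2 → ℝ)) (w p : Fin 2 → ℝ) :
    T '' halfCone w p = halfCone (T w) (T p) := by
  ext x
  constructor
  · rintro ⟨_, ⟨a, b, ha, hb, rfl⟩, rfl⟩
    exact ⟨a, b, ha, hb, by simp⟩
  · rintro ⟨a, b, ha, hb, rfl⟩
    exact ⟨_, ⟨a, b, ha, hb, rfl⟩, by simp⟩

lemma halfCone_smul {ρ σ : ℝ} (hρ : 0 < ρ) (hσ : 0 < σ) (w p : Fin 2 → ℝ) :
    halfCone (ρ • w) (σ • p) = halfCone w p := by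
  ext x
  constructor
  · rintro ⟨a, b, ha, hb, rfl⟩
    exact ⟨a * ρ, b * σ, by positivity, by positivity, by simp [smul_smul]⟩
  · rintro ⟨a, b, ha, hb, rfl⟩
    refine ⟨a / ρ, b / σ, by positivity, by positivity, ?_⟩
    rw [smul_smul, smul_smul, div_mul_cancel₀ _ hρ.ne', div_mul_cancel₀ _ hσ.ne']

lemma exists_polar {x y : ℝ} (h : x ≠ 0 ∨ y ≠ 0) :
    ∃ r φ : ℝ, 0 < r ∧ -π < φ ∧ φ ≤ π ∧ x = r * Real.cos φ ∧ y = r * Real.sin φ := by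
  have hz : (⟨x, y⟩ : ℂ) ≠ 0 := by
    intro h0
    rw [Complex.ext_iff] at h0
    rcases h with h | h
    · exact h h0.1
    · exact h h0.2
  refine ⟨‖(⟨x, y⟩ : ℂ)‖, Complex.arg ⟨x, y⟩, norm_pos_iff.mpr hz, Complex.neg_pi_lt_arg _,
    Complex.arg_le_pi _, ?_, ?_⟩
  · exact (Complex.norm_mul_cos_arg ⟨x, y⟩).symm
  · exact (Complex.norm_mul_sin_arg ⟨x, y⟩).symm

/-- Description of a half-open cone by angles; `ε = 1` measures them counterclockwise from the
direction `β`, and `ε = -1` clockwise. -/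
lemma halfCone_eq {ε : ℝ} (hε : ε = 1 ∨ ε = -1) (β γ : ℝ) (h0 : 0 < γ) (hπ : γ < π) :
    halfCone (dir β) (dir (β + ε * γ)) =
      {x | ∃ r φ : ℝ, 0 < r ∧ 0 ≤ φ ∧ φ < γ ∧ x = r • dir (β + ε * φ)} := by
  have hs : 0 < Real.sin γ := Real.sin_pos_of_pos_of_lt_pi h0 hπ
  have hcos : ∀ t, Real.cos (ε * t) = Real.cos t := by
    rcases hε with rfl | rfl <;> simp
  have hsin : ∀ t, Real.sin (ε * t) = ε * Real.sin t := by
    rcases hε with rfl | rfl <;> simp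
  ext x
  constructor
  · rintro ⟨a, b, ha, hb, rfl⟩
    -- The vector in the (possibly reflected) frame in which `dir β` is the first basis vector.
    have hne : a + b * Real.cos γ ≠ 0 ∨ b * Real.sin γ ≠ 0 := by
      by_contra! hcon
      have hb0 : b = 0 := by
        rcases mul_eq_zero.mp hcon.2 with h | h
        · exact h
        · exact absurd h hs.ne'
      have := hcon.1
      rw [hb0] at this
      linarith
    obtain ⟨r, φ, hr, hφ1, hφ2, hx, hy⟩ := exists_polar hne
    have hsφ : 0 ≤ Real.sin φ := by
      have : 0 ≤ r * Real.sin φ := hy ▸ (by positivity)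
      exact nonneg_of_mul_nonneg_right this hr
    have hφ0 : 0 ≤ φ := by
      by_contra! hneg
      linarith [Real.sin_neg_of_neg_of_neg_pi_lt hneg hφ1]
    have hd : 0 < Real.sin (γ - φ) := by
      have : r * Real.sin (γ - φ) = a * Real.sin γ := by
        rw [Real.sin_sub]
        linear_combination (-Real.sin γ) * hx + Real.cos γ * hy
      exact pos_of_mul_pos_right (this ▸ mul_pos ha hs) hr.le
    have hφγ : φ < γ := by
      by_contra! hle
      linarith [Real.sin_nonpos_of_nonpos_of_neg_pi_le (x := γ - φ) (by linarith) (by linarith)]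
    refine ⟨r, φ, hr, hφ0, hφγ, ?_⟩
    ext i
    fin_cases i
    · simp only [dir, Pi.add_apply, Pi.smul_apply, smul_eq_mul, Real.cos_add, Real.sin_add, hcos,
        hsin, Fin.zero_eta, Matrix.cons_val_zero]
      linear_combination Real.cos β * hx - ε * Real.sin β * hy
    · simp only [dir, Pi.add_apply, Pi.smul_apply, smul_eq_mul, Real.cos_add, Real.sin_add, hcos,
        hsin, Fin.mk_one, Matrix.cons_val_one, Matrix.cons_val_zero]
      linear_combination Real.sin β * hx + ε * Real.cos β * hy
  · rintro ⟨r, φ, hr, hφ0, hφγ, rfl⟩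
    -- Coefficients given by the law of sines.
    refine ⟨r * Real.sin (γ - φ) / Real.sin γ, r * Real.sin φ / Real.sin γ, ?_, ?_, ?_⟩
    · have := Real.sin_pos_of_pos_of_lt_pi (x := γ - φ) (by linarith) (by linarith)
      positivity
    · have := Real.sin_nonneg_of_nonneg_of_le_pi (x := φ) (by linarith) (by linarith)
      positivity
    · ext i
      fin_cases i
      · simp only [dir, Pi.add_apply, Pi.smul_apply, smul_eq_mul, Real.cos_add, Real.sin_add, hcos,
          hsin, Real.sin_sub, Fin.zero_eta, Matrix.cons_val_zero]
        field_simp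
        ring
      · simp only [dir, Pi.add_apply, Pi.smul_apply, smul_eq_mul, Real.cos_add, Real.sin_add, hcos,
          hsin, Real.sin_sub, Fin.mk_one, Matrix.cons_val_one, Matrix.cons_val_zero]
        field_simp
        ring

/-- Two cones with common edge `dir β`, of angles `γ` and `δ` on its two sides, form a sector. -/
lemma union_eq_sector (β γ δ : ℝ) (hγ0 : 0 < γ) (hγ : γ < π) (hδ0 : 0 < δ) (hδ : δ < π) :
    halfCone (dir β) (dir (β + γ)) ∪ halfCone (dir β) (dir (β - δ)) =
      sector (γ + δ) (β + (γ - δ) / 2) := by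
  have h1 := halfCone_eq (Or.inl rfl) β γ hγ0 hγ
  have h2 := halfCone_eq (Or.inr rfl) β δ hδ0 hδ
  simp only [one_mul, neg_one_mul, ← sub_eq_add_neg] at h1 h2
  rw [h1, h2]
  ext x
  constructor
  · rintro (⟨r, φ, hr, h0, h, rfl⟩ | ⟨r, φ, hr, h0, h, rfl⟩)
    · exact ⟨r, β + φ, hr, by linarith, by linarith, by simp [dir]⟩
    · exact ⟨r, β - φ, hr, by linarith, by linarith, by simp [dir]⟩
  · rintro ⟨r, θ, hr, h1, h2, rfl⟩
    rcases le_total β θ with h | h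
    · exact Or.inl ⟨r, θ - β, hr, by linarith, by linarith, by simp [dir]⟩
    · exact Or.inr ⟨r, β - θ, hr, by linarith, by linarith, by simp [dir]⟩

lemma sector_eq_union {κ : ℝ} (hκ : κ ∈ Set.Ioo 0 (2 * π)) (α : ℝ) :
    sector κ α = halfCone (dir α) (dir (α + κ / 2)) ∪ halfCone (dir α) (dir (α - κ / 2)) := by
  have h1 := hκ.1
  have h2 := hκ.2
  rw [union_eq_sector α (κ / 2) (κ / 2) (by linarith) (by linarith) (by linarith) (by linarith)]
  simp

lemma exists_dir_of_cross_pos (β : ℝ) (x : Fin 2 → ℝ) (h : 0 < cross (dir β) x) :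
    ∃ r γ : ℝ, 0 < r ∧ 0 < γ ∧ γ < π ∧ x = r • dir (β + γ) := by
  simp only [cross, dir, Matrix.cons_val_zero, Matrix.cons_val_one] at h
  obtain ⟨r, φ, hr, hφ1, hφ2, hx, hy⟩ :=
    exists_polar (x := Real.cos β * x 0 + Real.sin β * x 1) (Or.inr h.ne')
  have hs : 0 < Real.sin φ := pos_of_mul_pos_right (hy ▸ h) hr.le
  refine ⟨r, φ, hr, ?_, ?_, ?_⟩
  · by_contra! hle
    linarith [Real.sin_nonpos_of_nonpos_of_neg_pi_le hle hφ1.le]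
  · refine lt_of_le_of_ne hφ2 ?_
    rintro rfl
    simp at hs
  · ext i
    fin_cases i
    · simp only [dir, Pi.smul_apply, smul_eq_mul, Real.cos_add, Fin.zero_eta,
        Matrix.cons_val_zero]
      linear_combination Real.cos β * hx - Real.sin β * hy - x 0 * Real.sin_sq_add_cos_sq β
    · simp only [dir, Pi.smul_apply, smul_eq_mul, Real.sin_add, Fin.mk_one, Matrix.cons_val_one,
        Matrix.cons_val_zero]
      linear_combination Real.sin β * hx + Real.cos β * hy - x 1 * Real.sin_sq_add_cos_sq β

lemma exists_dir_of_cross_neg (β : ℝ) (x : Fin 2 → ℝ) (h : cross (dir β) x < 0) :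
    ∃ r δ : ℝ, 0 < r ∧ 0 < δ ∧ δ < π ∧ x = r • dir (β - δ) := by
  obtain ⟨r, γ, hr, h0, hπ, hx⟩ := exists_dir_of_cross_pos β (-x) (by
    simp only [cross, Pi.neg_apply] at h ⊢
    linarith)
  refine ⟨r, π - γ, hr, by linarith, by linarith, ?_⟩
  rw [← neg_neg x, hx, show β - (π - γ) = β + γ - π by ring]
  ext i
  fin_cases i <;> simp [dir, Real.cos_sub_pi, Real.sin_sub_pi]

lemma union_halfCone_eq_sector (w p q : Fin 2 → ℝ) (hp : 0 < cross w p) (hq : cross w q < 0) :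
    ∃ κ' ∈ Set.Ioo (0 : ℝ) (2 * π), ∃ α' : ℝ, halfCone w p ∪ halfCone w q = sector κ' α' := by
  have hw : w 0 ≠ 0 ∨ w 1 ≠ 0 := by
    by_contra! h
    simp [cross, h.1, h.2] at hp
  obtain ⟨ρ, β, hρ, -, -, hx, hy⟩ := exists_polar hw
  have hwe : w = ρ • dir β := by
    ext i
    fin_cases i
    · simpa [dir] using hx
    · simpa [dir] using hy
  have hc : ∀ y, cross w y = ρ * cross (dir β) y := by
    intro y
    simp only [hwe, cross, Pi.smul_apply, smul_eq_mul]
    ring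
  rw [hc] at hp hq
  obtain ⟨r, γ, hr, hγ0, hγ, rfl⟩ :=
    exists_dir_of_cross_pos β p (pos_of_mul_pos_right hp hρ.le)
  obtain ⟨s, δ, hs, hδ0, hδ, rfl⟩ :=
    exists_dir_of_cross_neg β q (neg_of_mul_neg_right hq hρ.le)
  refine ⟨γ + δ, ⟨by linarith, by linarith⟩, β + (γ - δ) / 2, ?_⟩
  rw [hwe, halfCone_smul hρ hr, halfCone_smul hρ hs, union_eq_sector β γ δ hγ0 hγ hδ0 hδ]

lemma exists_cross_map (T : (Fin 2 → ℝ) →ₗ[ℝ] (Fin 2 → ℝ)) (hT : Function.Bijective T) :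
    ∃ d : ℝ, d ≠ 0 ∧ ∀ x y, cross (T x) (T y) = d * cross x y := by
  have hd : ∀ x y, cross (T x) (T y) = cross (T ![1, 0]) (T ![0, 1]) * cross x y := by
    intro x y
    have hx : ∀ z : Fin 2 → ℝ, T z = z 0 • T ![1, 0] + z 1 • T ![0, 1] := by
      intro z
      rw [← map_smul, ← map_smul, ← map_add]
      congr 1
      ext i
      fin_cases i <;> simp
    rw [hx x, hx y]
    simp only [cross, Pi.add_apply, Pi.smul_apply, smul_eq_mul]
    ring
  refine ⟨_, ?_, hd⟩
  intro h0
  obtain ⟨x, hx⟩ := hT.2 ![1, 0]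
  obtain ⟨y, hy⟩ := hT.2 ![0, 1]
  have := hd x y
  rw [h0, hx, hy] at this
  simp [cross] at this

lemma injOn_polar {a b : ℝ} (hab : b - a ≤ 2 * π) :
    Set.InjOn polarCoord.symm (Set.Ioo (0 : ℝ) 1 ×ˢ Set.Ioo a b) := by
  rintro ⟨r, θ⟩ ⟨hr, hθ⟩ ⟨s, φ⟩ ⟨hs, hφ⟩ h
  simp only [polarCoord_symm_apply, Prod.mk.injEq] at h
  obtain ⟨h1, h2⟩ := h
  simp only [Set.mem_Ioo] at hr hs hθ hφ
  have hrs : r = s := by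
    have : r ^ 2 = s ^ 2 := by
      linear_combination (r * Real.cos θ + s * Real.cos φ) * h1 +
        (r * Real.sin θ + s * Real.sin φ) * h2 - r ^ 2 * Real.sin_sq_add_cos_sq θ +
        s ^ 2 * Real.sin_sq_add_cos_sq φ
    exact (pow_left_inj₀ hr.1.le hs.1.le two_ne_zero).mp this
  subst hrs
  have c := mul_left_cancel₀ hr.1.ne' h1
  have d := mul_left_cancel₀ hr.1.ne' h2
  have hcos : Real.cos (θ - φ) = 1 := by
    rw [Real.cos_sub, c, d]
    linear_combination Real.sin_sq_add_cos_sq φ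
  have := (Real.cos_eq_one_iff_of_lt_of_lt (by linarith) (by linarith)).mp hcos
  rw [sub_eq_zero.mp this]

lemma volume_sector {κ : ℝ} (hκ : κ ∈ Set.Ioo 0 (2 * π)) (α : ℝ) :
    (volume (sector κ α ∩ unitDisc)).toReal = κ / 2 := by
  have hκ2 := hκ.2
  set S : Set (ℝ × ℝ) := Set.Ioo (0 : ℝ) 1 ×ˢ Set.Ioo (α - κ / 2) (α + κ / 2) with hS
  have hset : sector κ α ∩ unitDisc =
      MeasurableEquiv.finTwoArrow ⁻¹' (polarCoord.symm '' S) := by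
    ext x
    constructor
    · rintro ⟨⟨r, θ, hr, h1, h2, rfl⟩, hx⟩
      refine ⟨(r, θ), ⟨⟨hr, ?_⟩, h1, h2⟩, ?_⟩
      · simp only [unitDisc, Set.mem_ofPred_eq, Matrix.cons_val_zero, Matrix.cons_val_one] at hx
        have : r ^ 2 < 1 := by
          linear_combination hx - r ^ 2 * Real.sin_sq_add_cos_sq θ
        exact (sq_lt_one_iff₀ hr.le).mp this
      · simp [MeasurableEquiv.finTwoArrow, polarCoord_symm_apply]
    · rintro ⟨⟨r, θ⟩, ⟨⟨hr, hr1⟩, h1, h2⟩, hx⟩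
      simp only [polarCoord_symm_apply, MeasurableEquiv.finTwoArrow_apply, Prod.mk.injEq] at hx
      refine ⟨⟨r, θ, hr, h1, h2, ?_⟩, ?_⟩
      · ext i
        fin_cases i
        · exact hx.1.symm
        · exact hx.2.symm
      · simp only [unitDisc, Set.mem_ofPred_eq, ← hx.1, ← hx.2]
        have : r ^ 2 < 1 := (sq_lt_one_iff₀ hr.le).mpr hr1
        linear_combination this + r ^ 2 * Real.sin_sq_add_cos_sq θ
  have hSm : MeasurableSet S := measurableSet_Ioo.prod measurableSet_Ioo
  rw [hset, (volume_preserving_finTwoArrow ℝ).measure_preimage_equiv]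
  have hI := integral_image_eq_integral_abs_det_fderiv_smul volume hSm
    (fun p _ ↦ (hasFDerivAt_polarCoord_symm p).hasFDerivWithinAt)
    (injOn_polar (by linarith)) (fun _ ↦ (1 : ℝ))
  rw [setIntegral_const] at hI
  simp only [smul_eq_mul, mul_one, det_fderivPolarCoordSymm] at hI
  rw [← measureReal_def, hI]
  have : ∫ p in S, |p.1| = ∫ p in S, p.1 * 1 := by
    refine setIntegral_congr_fun hSm fun p hp ↦ ?_
    simp [abs_of_pos hp.1.1]
  rw [this, hS, Measure.volume_eq_prod,
    setIntegral_prod_mul (fun r : ℝ ↦ r) (fun _ : ℝ ↦ (1 : ℝ)),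
    ← integral_Ioc_eq_integral_Ioo, ← intervalIntegral.integral_of_le zero_le_one]
  have hκ1 := hκ.1
  rw [integral_id, setIntegral_const, measureReal_def, Real.volume_Ioo,
    ENNReal.toReal_ofReal (by linarith)]
  simp only [smul_eq_mul]
  ring

/-- The image of a planar sector under an invertible linear map is again a planar sector,
whose central angle is twice the area of its intersection with the unit disc. -/
theorem stmt_13 (T : (Fin 2 → ℝ) →ₗ[ℝ] (Fin 2 → ℝ)) (hT : Function.Bijective T)
    (κ α : ℝ) (hκ : κ ∈ Set.Ioo 0 (2 * π)) :
    ∃ κ' ∈ Set.Ioo (0 : ℝ) (2 * π), ∃ α' : ℝ,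
      T '' sector κ α = sector κ' α' ∧
      κ' = 2 * (volume (T '' sector κ α ∩ unitDisc)).toReal := by
  obtain ⟨d, hd, hcross⟩ := exists_cross_map T hT
  have hs : 0 < Real.sin (κ / 2) :=
    Real.sin_pos_of_pos_of_lt_pi (by linarith [hκ.1]) (by linarith [hκ.2])
  have hp : cross (T (dir α)) (T (dir (α + κ / 2))) = d * Real.sin (κ / 2) := by
    rw [hcross]
    simp only [cross, dir, Matrix.cons_val_zero, Matrix.cons_val_one, Real.cos_add, Real.sin_add]
    linear_combination d * Real.sin (κ / 2) * Real.sin_sq_add_cos_sq α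
  have hq : cross (T (dir α)) (T (dir (α - κ / 2))) = -(d * Real.sin (κ / 2)) := by
    rw [hcross]
    simp only [cross, dir, Matrix.cons_val_zero, Matrix.cons_val_one, Real.cos_sub, Real.sin_sub]
    linear_combination -d * Real.sin (κ / 2) * Real.sin_sq_add_cos_sq α
  have key : ∃ κ' ∈ Set.Ioo (0 : ℝ) (2 * π), ∃ α' : ℝ, T '' sector κ α = sector κ' α' := by
    rw [sector_eq_union hκ, Set.image_union, image_halfCone, image_halfCone]
    rcases lt_or_gt_of_ne hd with hneg | hpos
    -- An orientation-reversing map (`d < 0`) swaps the two sides of the central ray.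
    · rw [Set.union_comm]
      have := mul_neg_of_neg_of_pos hneg hs
      exact union_halfCone_eq_sector _ _ _ (by linarith) (by linarith)
    · have := mul_pos hpos hs
      exact union_halfCone_eq_sector _ _ _ (by linarith) (by linarith)
  obtain ⟨κ', hκ', α', h⟩ := key
  refine ⟨κ', hκ', α', h, ?_⟩
  rw [h, volume_sector hκ']
  ring
end

section
/- Let B be a symmetric positive-definite 2×2 real matrix and set A := B². Let κ ∈ (0, 2π) and α ∈ ℝ, let D_{κ,α} := { (r cos θ, r sin θ) ∈ ℝ² : r > 0, α − κ/2 < θ < α + κ/2 }, let R_α be the rotation matrix with rows (cos α, sin α) and (−sin α, cos α), set Ā := R_α A R_αᵀ with entries ā := Ā₁₁, b̄ := Ā₁₂, c̄ := Ā₂₂, and define κ̃ := π − arctan( (c̄·cot(κ/2) + b̄)/√(det A) ) − arctan( (c̄·cot(κ/2) − b̄)/√(det A) ). Then κ̃ ∈ (0, 2π) and there exists α̃ ∈ ℝ such that B⁻¹ D_{κ,α} = D_{κ̃,α̃}. In particular, if κ = π then κ̃ = π. -/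
/-!
In the orthonormal frame rotated by `β`, with coordinates `s` and `t`, a sector reaching an angle
`h₁` above and `h₂` below its axis, `0 < h₁, h₂ < π`, is described by linear inequalities:
`s > t cot h₁` on the half-plane `t ≥ 0` and `s > -t cot h₂` on the half-plane `t ≤ 0`
(`mem_sector_iff`). The point `y` lies in `B⁻¹ D_{κ,α}` iff `B y` lies in `D_{κ,α}`. Let `e, e'` be
the frame rotated by `α`, and choose `β` so that `B e' = m f'` with `m > 0`, where `f, f'` is the
frame rotated by `β`. As `B` is symmetric, the coordinates of `B y` are `t = m t'` and
`m s = d s' + b̄ t'` with `d = det B = √(det A)`, and `m² = c̄`. Hence the inequalities for `B y`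
with `h₁ = h₂ = κ/2` turn into those for `y` with `cot h₁ = (c̄ cot (κ/2) - b̄) / d` and
`cot h₂ = (c̄ cot (κ/2) + b̄) / d`, and `κ̃ = h₁ + h₂`.
-/

open Real MeasureTheory

/-- Every vector of the plane has polar coordinates, with the angle in `(-π, π]` relative to the
direction `β`. -/
lemma exists_polar_s18 (a b β : ℝ) : ∃ r φ : ℝ, 0 ≤ r ∧ r ^ 2 = a ^ 2 + b ^ 2 ∧ -π < φ ∧ φ ≤ π ∧
    a = r * cos (β + φ) ∧ b = r * sin (β + φ) ∧
    cos β * a + sin β * b = r * cos φ ∧ -sin β * a + cos β * b = r * sin φ := by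
  set z : ℂ := ⟨cos β * a + sin β * b, -sin β * a + cos β * b⟩ with hz
  have h1 : ‖z‖ * cos z.arg = cos β * a + sin β * b := Complex.norm_mul_cos_arg z
  have h2 : ‖z‖ * sin z.arg = -sin β * a + cos β * b := Complex.norm_mul_sin_arg z
  have hβ := sin_sq_add_cos_sq β
  refine ⟨‖z‖, z.arg, norm_nonneg z, ?_, Complex.neg_pi_lt_arg z, Complex.arg_le_pi z, ?_, ?_,
    h1.symm, h2.symm⟩
  · rw [Complex.sq_norm, Complex.normSq_apply]
    simp only [hz]
    linear_combination (a ^ 2 + b ^ 2) * hβ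
  · rw [cos_add]
    linear_combination -cos β * h1 + sin β * h2 - a * hβ
  · rw [sin_add]
    linear_combination -sin β * h1 - cos β * h2 - b * hβ

/-- A sector reaching from `β - h₂` to `β + h₁` is cut out by one linear inequality on each side of
the line in direction `β`. On that line itself both inequalities say that the first coordinate is
positive. -/
lemma mem_sector_iff_s18 (h₁ h₂ β : ℝ) (pos₁ : 0 < h₁) (lt₁ : h₁ < π) (pos₂ : 0 < h₂) (lt₂ : h₂ < π)
    (x : Fin 2 → ℝ) :
    x ∈ sector (h₁ + h₂) (β + (h₁ - h₂) / 2) ↔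
      (0 ≤ -sin β * x 0 + cos β * x 1 →
        cot h₁ * (-sin β * x 0 + cos β * x 1) < cos β * x 0 + sin β * x 1) ∧
      (-sin β * x 0 + cos β * x 1 ≤ 0 →
        -cot h₂ * (-sin β * x 0 + cos β * x 1) < cos β * x 0 + sin β * x 1) := by
  have s₁ := sin_pos_of_pos_of_lt_pi pos₁ lt₁
  have s₂ := sin_pos_of_pos_of_lt_pi pos₂ lt₂
  -- the inequalities in polar form
  have key₁ : ∀ r φ : ℝ, cot h₁ * (r * sin φ) < r * cos φ ↔ 0 < r * sin (h₁ - φ) := by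
    intro r φ
    rw [cot_eq_cos_div_sin, div_mul_eq_mul_div, div_lt_iff₀ s₁, sin_sub, ← sub_pos]
    ring_nf
  have key₂ : ∀ r φ : ℝ, -cot h₂ * (r * sin φ) < r * cos φ ↔ 0 < r * sin (h₂ + φ) := by
    intro r φ
    rw [cot_eq_cos_div_sin, ← neg_div, div_mul_eq_mul_div, div_lt_iff₀ s₂, sin_add, ← sub_pos]
    ring_nf
  constructor
  · rintro ⟨r, θ, hr, hl, hu, rfl⟩
    obtain ⟨φ, rfl⟩ : ∃ φ, θ = β + φ := ⟨θ - β, by ring⟩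
    have hl' : -h₂ < φ := by linarith
    have hu' : φ < h₁ := by linarith
    have hβ := sin_sq_add_cos_sq β
    have e1 : -sin β * (r * cos (β + φ)) + cos β * (r * sin (β + φ)) = r * sin φ := by
      rw [cos_add, sin_add]
      linear_combination r * sin φ * hβ
    have e2 : cos β * (r * cos (β + φ)) + sin β * (r * sin (β + φ)) = r * cos φ := by
      rw [cos_add, sin_add]
      linear_combination r * cos φ * hβ
    simp only [Matrix.cons_val_zero, Matrix.cons_val_one, e1, e2, key₁, key₂]
    refine ⟨fun h => mul_pos hr ?_, fun h => mul_pos hr ?_⟩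
    · have hφ : 0 ≤ φ := by
        by_contra hn
        have := sin_neg_of_neg_of_neg_pi_lt (not_le.1 hn) (by linarith)
        nlinarith
      exact sin_pos_of_pos_of_lt_pi (by linarith) (by linarith)
    · have hφ : φ ≤ 0 := by
        by_contra hn
        have := sin_pos_of_pos_of_lt_pi (not_le.1 hn) (by linarith)
        nlinarith
      exact sin_pos_of_pos_of_lt_pi (by linarith) (by linarith)
  · obtain ⟨r, φ, hr0, -, hφl, hφu, hx0, hx1, hs, ht⟩ := exists_polar_s18 (x 0) (x 1) β
    rw [hs, ht, key₁, key₂]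
    rintro ⟨H₁, H₂⟩
    have hr : 0 < r := by
      rcases hr0.lt_or_eq with h | h
      · exact h
      · have := H₁ (by simp [← h])
        simp [← h] at this
    refine ⟨r, β + φ, hr, ?_, ?_, ?_⟩
    · suffices -h₂ < φ by linarith
      by_contra hn
      have hφ : φ < 0 := by linarith
      have h1 := H₂ (mul_nonpos_of_nonneg_of_nonpos hr0
        (sin_neg_of_neg_of_neg_pi_lt hφ hφl).le)
      have h2 : sin (h₂ + φ) ≤ 0 :=
        sin_nonpos_of_nonpos_of_neg_pi_le (by linarith) (by linarith)
      nlinarith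
    · suffices φ < h₁ by linarith
      by_contra hn
      have h1 := H₁ (mul_nonneg hr0 (sin_nonneg_of_nonneg_of_le_pi (by linarith) hφu))
      have h2 : sin (h₁ - φ) ≤ 0 :=
        sin_nonpos_of_nonpos_of_neg_pi_le (by linarith) (by linarith)
      nlinarith
    · ext i
      fin_cases i
      · exact hx0
      · exact hx1

lemma cot_pi_div_two_sub_arctan (q : ℝ) : cot (π / 2 - arctan q) = q := by
  rw [cot_eq_cos_div_sin, cos_pi_div_two_sub, sin_pi_div_two_sub, ← tan_eq_sin_div_cos, tan_arctan]

/-- For a symmetric positive-definite `B` with `A = B²`, the image `B⁻¹ D_{κ,α}` of the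
sector `D_{κ,α}` is again a sector whose central angle is
`κ̃ = π − arctan((c̄·cot(κ/2) + b̄)/√(det A)) − arctan((c̄·cot(κ/2) − b̄)/√(det A))`,
where `Ā = R_α A R_αᵀ`, `b̄ = Ā₁₂`, `c̄ = Ā₂₂`; moreover `κ̃ ∈ (0, 2π)` and, if `κ = π`,
then `κ̃ = π`. -/
theorem stmt_18 (B : Matrix (Fin 2) (Fin 2) ℝ) (hBsymm : B.IsSymm) (hBpos : B.PosDef)
    (A : Matrix (Fin 2) (Fin 2) ℝ) (hA : A = B * B) (κ α : ℝ)
    (hκ : κ ∈ Set.Ioo 0 (2 * π))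
    (Rα Abar : Matrix (Fin 2) (Fin 2) ℝ)
    (hR : Rα = !![Real.cos α, Real.sin α; -Real.sin α, Real.cos α])
    (hAbar : Abar = Rα * A * Rα.transpose) (κ' : ℝ)
    (hκ' : κ' = π - Real.arctan ((Abar 1 1 * Real.cot (κ / 2) + Abar 0 1) / Real.sqrt A.det)
              - Real.arctan ((Abar 1 1 * Real.cot (κ / 2) - Abar 0 1) / Real.sqrt A.det)) :
    κ' ∈ Set.Ioo 0 (2 * π) ∧
      (∃ α' : ℝ, (fun x => B⁻¹.mulVec x) '' sector κ α = sector κ' α') ∧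
      (κ = π → κ' = π) := by
  have hdet : 0 < B.det := hBpos.det_pos
  have hBunit : IsUnit B.det := hdet.ne'.isUnit
  have hsqrt : √A.det = B.det := by
    rw [hA, Matrix.det_mul, sqrt_mul_self hdet.le]
  rw [hsqrt] at hκ'
  have hsym : B 1 0 = B 0 1 := hBsymm.apply 0 1
  have hd : B.det = B 0 0 * B 1 1 - B 0 1 * B 0 1 := by rw [Matrix.det_fin_two, hsym]
  obtain ⟨hκ0, hκ2⟩ := hκ
  have hα := sin_sq_add_cos_sq α
  -- `m` and `β` are the polar coordinates of `B e' = m f'`, turned by a right angle.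
  obtain ⟨m, β, hm0, hm2, -, -, hc, hs, -, -⟩ :=
    exists_polar_s18 (-B 0 1 * sin α + B 1 1 * cos α) (B 0 0 * sin α - B 0 1 * cos α) 0
  rw [zero_add] at hc hs
  have hβ := sin_sq_add_cos_sq β
  have hc' : Abar 1 1 = m ^ 2 := by
    rw [hm2, hAbar, hR, hA]
    simp [Matrix.vecMul, dotProduct, Matrix.mul_apply, Fin.sum_univ_two, hsym]
    ring
  have hb' : Abar 0 1 = (B 0 0 * cos α + B 0 1 * sin α) * (-B 0 0 * sin α + B 0 1 * cos α)
      + (B 0 1 * cos α + B 1 1 * sin α) * (-B 0 1 * sin α + B 1 1 * cos α) := by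
    rw [hAbar, hR, hA]
    simp [Matrix.vecMul, dotProduct, Matrix.mul_apply, Fin.sum_univ_two, hsym]
    ring
  have hdm : B.det = (B 0 0 * cos α + B 0 1 * sin α) * (m * cos β)
      + (B 0 1 * cos α + B 1 1 * sin α) * (m * sin β) := by
    rw [← hc, ← hs, hd]
    linear_combination -(B 0 0 * B 1 1 - B 0 1 * B 0 1) * hα
  have hbm : Abar 0 1 = -(B 0 0 * cos α + B 0 1 * sin α) * (m * sin β)
      + (B 0 1 * cos α + B 1 1 * sin α) * (m * cos β) := by
    rw [hb', ← hc, ← hs]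
    ring
  have hm : 0 < m := by
    rcases hm0.lt_or_eq with h | h
    · exact h
    · rw [hdm, ← h] at hdet
      simp at hdet
  set d := B.det
  set b := Abar 0 1
  set k := cot (κ / 2) with hk
  rw [hc'] at hκ'
  set h₁ := π / 2 - arctan ((m ^ 2 * k - b) / d) with hh₁
  set h₂ := π / 2 - arctan ((m ^ 2 * k + b) / d) with hh₂
  have hsum : κ' = h₁ + h₂ := by rw [hκ', hh₁, hh₂]; ring
  have b1 := arctan_lt_pi_div_two ((m ^ 2 * k - b) / d)
  have b2 := arctan_lt_pi_div_two ((m ^ 2 * k + b) / d)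
  have b3 := neg_pi_div_two_lt_arctan ((m ^ 2 * k - b) / d)
  have b4 := neg_pi_div_two_lt_arctan ((m ^ 2 * k + b) / d)
  refine ⟨⟨by linarith, by linarith⟩, ⟨β + (h₁ - h₂) / 2, ?_⟩, ?_⟩
  · ext y
    have himg : y ∈ (fun x => B⁻¹.mulVec x) '' sector κ α ↔ B.mulVec y ∈ sector κ α := by
      constructor
      · rintro ⟨x, hx, rfl⟩
        simpa only [Matrix.mulVec_mulVec, Matrix.mul_nonsing_inv B hBunit, Matrix.one_mulVec] using hx
      · intro h
        exact ⟨_, h, by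
          simp only [Matrix.mulVec_mulVec, Matrix.nonsing_inv_mul B hBunit, Matrix.one_mulVec]⟩
    have hκs : sector κ α = sector (κ / 2 + κ / 2) (α + (κ / 2 - κ / 2) / 2) := by
      congr 1 <;> ring
    rw [himg, hκs, hsum, mem_sector_iff_s18 _ _ _ (by linarith) (by linarith) (by linarith)
      (by linarith), mem_sector_iff_s18 _ _ _ (by linarith) (by linarith) (by linarith)
      (by linarith), hh₁, hh₂, cot_pi_div_two_sub_arctan, cot_pi_div_two_sub_arctan, ← hk]
    have y0 : B.mulVec y 0 = B 0 0 * y 0 + B 0 1 * y 1 := by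
      simp [Matrix.mulVec, dotProduct, Fin.sum_univ_two]
    have y1 : B.mulVec y 1 = B 0 1 * y 0 + B 1 1 * y 1 := by
      simp [Matrix.mulVec, dotProduct, Fin.sum_univ_two, hsym]
    set t' := -sin β * y 0 + cos β * y 1 with ht'
    set s' := cos β * y 0 + sin β * y 1 with hs'
    set s := cos α * B.mulVec y 0 + sin α * B.mulVec y 1 with hs1
    have ht : -sin α * B.mulVec y 0 + cos α * B.mulVec y 1 = m * t' := by
      rw [y0, y1, ht']
      linear_combination y 1 * hc - y 0 * hs
    have hms : m * s = d * s' + b * t' := by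
      rw [hs1, y0, y1, hdm, hbm, hs', ht']
      linear_combination -m * ((B 0 0 * cos α + B 0 1 * sin α) * y 0
        + (B 0 1 * cos α + B 1 1 * sin α) * y 1) * hβ
    rw [ht]
    refine and_congr (imp_congr (mul_nonneg_iff_of_pos_left hm) ?_) (imp_congr ?_ ?_)
    · rw [← mul_lt_mul_iff_right₀ hm, hms, div_mul_eq_mul_div, div_lt_iff₀ hdet, ← sub_pos,
        ← sub_pos (a := s' * d)]
      ring_nf
    · rw [← not_lt, ← not_lt, mul_pos_iff_of_pos_left hm]
    · rw [← mul_lt_mul_iff_right₀ hm, hms, ← neg_div, div_mul_eq_mul_div, div_lt_iff₀ hdet,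
        ← sub_pos, ← sub_pos (a := s' * d)]
      ring_nf
  · intro h
    have hk0 : k = 0 := by rw [hk, h, cot_eq_cos_div_sin, cos_pi_div_two, zero_div]
    rw [hκ', hk0, mul_zero, zero_add, zero_sub, neg_div, arctan_neg]
    ring
end
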